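/- Dziugaite–Roy-type bound for Gibbs posterior and Gibbs data-dependent prior: Let ℓ : H × Z → [0,1] and ℓ′ : H × Z → [0,1] be measurable losses and α, α′ ≥ 0. Define the posterior Q_S with density proportional to exp(−α·R_S^{ℓ′}(h)) and the data-dependent prior P_S with density proportional to exp(−α′·R_S^{ℓ′}(h)) (with respect to λ, normalizers finite and positive). Then for any probability measure D on Z and any δ ∈ (0,1], with probability at least 1−δ over S′ ∼ D^m, S ∼ D^m, h′ ∼ P_S, and h ∼ Q_S one has kl(R_S^ℓ(h) ‖ R_D^ℓ(h)) ≤ (1/m)·[ α·(R_S^{ℓ′}(h′) − R_S^{ℓ′}(h)) + α′·(R_S^{ℓ′}(h) − R_S^{ℓ′}(h′)) + 2α′ + ln(8√m/δ²) ]. -/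

import Mathlib

open MeasureTheory ProbabilityTheory

/-- The true risk `R_D^ℓ(h) = E_{z∼D} ℓ(h,z)`. -/
noncomputable def trueRisk {H Z : Type*} [MeasurableSpace Z]
    (D : Measure Z) (ℓ : H → Z → ℝ) (h : H) : ℝ :=
  ∫ z, ℓ h z ∂D

/-- The empirical risk `R_S^ℓ(h) = (1/m) Σ_{i=1}^m ℓ(h,z_i)`. -/
noncomputable def empRisk {H Z : Type*} {m : ℕ}
    (ℓ : H → Z → ℝ) (h : H) (S : Fin m → Z) : ℝ :=
  (∑ i, ℓ h (S i)) / m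

/-- The binary KL divergence `kl(q‖p) = q ln(q/p) + (1−q) ln((1−q)/(1−p))`. -/
noncomputable def binKL (q p : ℝ) : ℝ :=
  q * Real.log (q / p) + (1 - q) * Real.log ((1 - q) / (1 - p))

/-!
Since the empirical risks lie in `[0, 1]`, the data-dependent prior satisfies
`P_S ≤ exp (2 α') • P_{S₀}` for one fixed sample `S₀`. The posterior `Q_S` is the tilting of `P_S`
by `w_S = (α' - α) R_S^{ℓ'}`, so for nonnegative `φ`
`E_{h' ∼ P_S} [exp (w_S h')] * E_{h ∼ Q_S} [exp (-w_S h) φ h] = E_{h ∼ P_S} [φ h]`.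
With `φ h = exp (m kl(R_S^ℓ h ‖ R_D^ℓ h))`, the right-hand side is at most
`exp (2 α') E_{h ∼ P_{S₀}} [φ h]`, where the prior no longer depends on `S` and Tonelli leaves
Maurer's bound `E_S [exp (m kl(R_S^ℓ h ‖ R_D^ℓ h))] ≤ 8 √m`: by convexity it suffices to treat
Bernoulli losses, for which the expectation is a binomial sum controlled by Stirling's formula.
Markov's inequality concludes.
-/

section BinomialSum

lemma factorial_le_exp_one_mul_sqrt_mul_pow {n : ℕ} (hn : n ≠ 0) :
    (n.factorial : ℝ) ≤ Real.exp 1 * √n * (n / Real.exp 1) ^ n := by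
  obtain ⟨k, rfl⟩ := Nat.exists_eq_succ_of_ne_zero hn
  have h_stirling : Stirling.stirlingSeq k.succ ≤ Real.exp 1 / √2 :=
    Stirling.stirlingSeq_one ▸ Stirling.stirlingSeq'_antitone (Nat.zero_le k)
  rw [Stirling.stirlingSeq, div_le_iff₀ (by positivity), Real.sqrt_mul zero_le_two] at h_stirling
  refine h_stirling.trans_eq ?_
  field_simp

lemma sum_range_inv_sqrt_succ_le (n : ℕ) :
    ∑ j ∈ Finset.range n, (√(j + 1 : ℝ))⁻¹ ≤ 2 * √n := by
  induction n with
  | zero => simp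
  | succ n ih =>
    have h_telescope : (√(n + 1 : ℝ))⁻¹ ≤ 2 * √(n + 1 : ℝ) - 2 * √n := by
      have hn : √(n : ℝ) ^ 2 = n := Real.sq_sqrt n.cast_nonneg
      have hn1 : √(n + 1 : ℝ) ^ 2 = n + 1 := Real.sq_sqrt (by positivity)
      rw [inv_le_iff_one_le_mul₀ (by positivity)]
      nlinarith [sq_nonneg (√(n + 1 : ℝ) - √n)]
    rw [Finset.sum_range_succ, Nat.cast_succ]
    linarith

lemma choose_mul_div_pow_mul_div_pow_mul_sqrt_le {a b : ℕ} (hab : a + b ≠ 0) :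
    ((a + b).choose a * (a / (a + b : ℕ)) ^ a * (b / (a + b : ℕ)) ^ b : ℝ)
      * (2 * Real.pi * (√a * √b)) ≤ Real.exp 1 * √(a + b : ℕ) := by
  set n := a + b with hn
  have hn0 : (0 : ℝ) < n := by positivity
  have hscale (k : ℕ) : (k / Real.exp 1 : ℝ) ^ k = (k / n) ^ k * (n / Real.exp 1) ^ k := by
    rw [← mul_pow, div_mul_div_cancel₀ hn0.ne']
  have hsqrt (k : ℕ) : √(2 * Real.pi * k) = √(2 * Real.pi) * √k := Real.sqrt_mul (by positivity) _
  have hfact : (n.choose a : ℝ) * (a.factorial * b.factorial) = n.factorial := by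
    rw [← mul_assoc, hn, Nat.choose_symm_add]
    exact_mod_cast Nat.add_choose_mul_factorial_mul_factorial a b
  refine le_of_mul_le_mul_right ?_ (show (0 : ℝ) < (n / Real.exp 1) ^ n by positivity)
  calc _ = (n.choose a : ℝ) * ((√(2 * Real.pi * a) * (a / Real.exp 1) ^ a)
          * (√(2 * Real.pi * b) * (b / Real.exp 1) ^ b)) := by
        rw [hscale a, hscale b, hsqrt a, hsqrt b, hn, pow_add]
        linear_combination (-((n.choose a : ℝ) * (a / n) ^ a * (b / n) ^ b * (√a * √b)
          * (n / Real.exp 1) ^ a * (n / Real.exp 1) ^ b))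
          * Real.mul_self_sqrt (show 0 ≤ 2 * Real.pi by positivity)
    _ ≤ n.choose a * (a.factorial * b.factorial) := by
        gcongr <;> exact Stirling.le_factorial_stirling _
    _ = n.factorial := hfact
    _ ≤ _ := factorial_le_exp_one_mul_sqrt_mul_pow hab

lemma sqrt_succ_le_two_mul_sqrt {n : ℕ} (hn : n ≠ 0) : √(n + 1 : ℝ) ≤ 2 * √n := by
  have hn1 : (1 : ℝ) ≤ n := mod_cast Nat.one_le_iff_ne_zero.2 hn
  rw [Real.sqrt_le_left (by positivity), mul_pow, Real.sq_sqrt (by positivity)]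
  linarith

lemma inv_sqrt_le_two_mul_inv_sqrt_succ {n : ℕ} (hn : n ≠ 0) :
    (√(n : ℝ))⁻¹ ≤ 2 * (√(n + 1 : ℝ))⁻¹ := by
  rw [← div_eq_mul_inv, le_div_iff₀ (by positivity), inv_mul_le_iff₀ (by positivity), mul_comm]
  exact sqrt_succ_le_two_mul_sqrt hn

lemma choose_mul_div_pow_mul_div_pow_le (a b : ℕ) :
    ((a + b).choose a * (a / (a + b : ℕ)) ^ a * (b / (a + b : ℕ)) ^ b : ℝ)
      ≤ (√(a + 1 : ℝ))⁻¹ + (√(b + 1 : ℝ))⁻¹ := by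
  rcases eq_or_ne a 0 with rfl | ha
  · rcases eq_or_ne b 0 with rfl | hb <;> simp [*]
  rcases eq_or_ne b 0 with rfl | hb
  · simp [ha]
  set T : ℝ := (a + b).choose a * (a / (a + b : ℕ)) ^ a * (b / (a + b : ℕ)) ^ b
  have hexp : Real.exp 1 ≤ Real.pi := by linarith [Real.exp_one_lt_d9, Real.pi_gt_three]
  have hsqrt : √((a + b : ℕ) : ℝ) ≤ √a + √b := by
    rw [Real.sqrt_le_left (by positivity), add_sq, Real.sq_sqrt a.cast_nonneg,
      Real.sq_sqrt b.cast_nonneg, Nat.cast_add]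
    linarith [show 0 ≤ 2 * √(a : ℝ) * √b by positivity]
  have hT : T * (2 * (√a * √b)) ≤ √a + √b := by
    refine le_of_mul_le_mul_left ?_ Real.pi_pos
    calc Real.pi * (T * (2 * (√a * √b))) = T * (2 * Real.pi * (√a * √b)) := by ring
      _ ≤ Real.exp 1 * √(a + b : ℕ) := choose_mul_div_pow_mul_div_pow_mul_sqrt_le (by omega)
      _ ≤ Real.pi * (√a + √b) := by gcongr
  calc T ≤ (√a + √b) / (2 * (√a * √b)) := (le_div_iff₀ (by positivity)).2 hT
    _ = ((√(a : ℝ))⁻¹ + (√(b : ℝ))⁻¹) / 2 := by field_simp; ring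
    _ ≤ _ := by
      linarith [inv_sqrt_le_two_mul_inv_sqrt_succ ha, inv_sqrt_le_two_mul_inv_sqrt_succ hb]

lemma sum_choose_mul_div_pow_mul_div_pow_le {m : ℕ} (hm : m ≠ 0) :
    ∑ k ∈ Finset.range (m + 1),
      (m.choose k * (k / m) ^ k * ((m - k : ℕ) / m) ^ (m - k) : ℝ) ≤ 8 * √m := by
  calc _ = ∑ ab ∈ Finset.HasAntidiagonal.antidiagonal m,
          (m.choose ab.1 * (ab.1 / m) ^ ab.1 * (ab.2 / m) ^ ab.2 : ℝ) :=
        (Finset.Nat.sum_antidiagonal_eq_sum_range_succ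
          (fun a b ↦ (m.choose a * (a / m) ^ a * (b / m) ^ b : ℝ)) m).symm
    _ ≤ ∑ ab ∈ Finset.HasAntidiagonal.antidiagonal m,
          ((√(ab.1 + 1 : ℝ))⁻¹ + (√(ab.2 + 1 : ℝ))⁻¹) := by
        refine Finset.sum_le_sum fun ab hab ↦ ?_
        rw [← Finset.HasAntidiagonal.mem_antidiagonal.1 hab]
        exact choose_mul_div_pow_mul_div_pow_le ab.1 ab.2
    _ = 2 * ∑ k ∈ Finset.range (m + 1), (√(k + 1 : ℝ))⁻¹ := by
        rw [Finset.sum_add_distrib, ← Finset.Nat.sum_antidiagonal_swap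
          (f := fun ab ↦ (√(ab.2 + 1 : ℝ))⁻¹)]
        simp only [Prod.snd_swap]
        rw [← two_mul]
        exact congrArg _ (Finset.Nat.sum_antidiagonal_eq_sum_range_succ
          (fun a _ ↦ (√(a + 1 : ℝ))⁻¹) m)
    _ ≤ 2 * (2 * √(m + 1 : ℕ)) := by gcongr; exact sum_range_inv_sqrt_succ_le _
    _ ≤ 8 * √m := by
        rw [Nat.cast_succ]
        linarith [sqrt_succ_le_two_mul_sqrt hm]

end BinomialSum

section BinKL

lemma binKL_self (p : ℝ) : binKL p p = 0 := by
  rcases eq_or_ne p 0 with rfl | hp0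
  · simp [binKL]
  rcases eq_or_ne p 1 with rfl | hp1
  · simp [binKL]
  · simp [binKL, hp0, sub_ne_zero.2 hp1.symm]

lemma measurable_binKL {Ω : Type*} [MeasurableSpace Ω] {q p : Ω → ℝ} (hq : Measurable q)
    (hp : Measurable p) : Measurable fun ω ↦ binKL (q ω) (p ω) := by
  unfold binKL
  fun_prop

lemma binKL_eq_neg_binEntropy_sub {p : ℝ} (hp : p ∈ Set.Ioo (0 : ℝ) 1) (q : ℝ) :
    binKL q p = -Real.binEntropy q - (q * Real.log p + (1 - q) * Real.log (1 - p)) := by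
  have hlog (x : ℝ) {y : ℝ} (hy : y ≠ 0) :
      x * Real.log (x / y) = x * Real.log x - x * Real.log y := by
    rcases eq_or_ne x 0 with rfl | hx
    · simp
    · rw [Real.log_div hx hy, mul_sub]
  rw [binKL, hlog q hp.1.ne', hlog (1 - q) (sub_pos.2 hp.2).ne', Real.binEntropy, Real.log_inv,
    Real.log_inv]
  ring

lemma convexOn_binKL {p : ℝ} (hp : p ∈ Set.Ioo (0 : ℝ) 1) :
    ConvexOn ℝ (Set.Icc 0 1) fun q ↦ binKL q p := by
  have h_affine : ConcaveOn ℝ (Set.Icc 0 1)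
      fun q : ℝ ↦ q * Real.log p + (1 - q) * Real.log (1 - p) := by
    refine ⟨convex_Icc 0 1, fun x _ y _ a b _ _ hab ↦ le_of_eq ?_⟩
    simp only [smul_eq_mul]
    linear_combination Real.log (1 - p) * hab
  simp_rw [binKL_eq_neg_binEntropy_sub hp]
  exact Real.strictConcave_binEntropy.concaveOn.neg.sub h_affine

lemma convexOn_exp_mul_binKL {c p : ℝ} (hc : 0 ≤ c) (hp : p ∈ Set.Ioo (0 : ℝ) 1) :
    ConvexOn ℝ (Set.Icc 0 1) fun q ↦ Real.exp (c * binKL q p) :=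
  have h := (convexOn_binKL hp).smul hc
  ⟨h.1, fun _ hx _ hy _ _ ha hb hab ↦ (Real.exp_le_exp.2 (h.2 hx hy ha hb hab)).trans
    (convexOn_exp.2 (Set.mem_univ _) (Set.mem_univ _) ha hb hab)⟩

lemma pow_mul_pow_mul_exp_mul_binKL {m k : ℕ} (hm : m ≠ 0) (hk : k ≤ m) {p : ℝ}
    (hp : p ∈ Set.Ioo (0 : ℝ) 1) :
    p ^ k * (1 - p) ^ (m - k) * Real.exp (m * binKL (k / m) p)
      = (k / m : ℝ) ^ k * ((m - k : ℕ) / m) ^ (m - k) := by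
  have hm0 : (m : ℝ) ≠ 0 := Nat.cast_ne_zero.2 hm
  have hexp (j : ℕ) {r : ℝ} (hr : 0 < r) :
      r ^ j * Real.exp (j * Real.log (j / m / r)) = (j / m : ℝ) ^ j := by
    rcases eq_or_ne j 0 with rfl | hj
    · simp
    · rw [Real.exp_nat_mul, Real.exp_log (by positivity), ← mul_pow, mul_div_cancel₀ _ hr.ne']
  have hcompl : (1 - k / m : ℝ) = (m - k : ℕ) / m := by
    rw [Nat.cast_sub hk, sub_div, div_self hm0]
  have hsplit : m * binKL (k / m) p = k * Real.log (k / m / p)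
      + (m - k : ℕ) * Real.log ((m - k : ℕ) / m / (1 - p)) := by
    rw [binKL, hcompl]
    field_simp
  rw [hsplit, Real.exp_add, mul_mul_mul_comm, hexp k hp.1, hexp (m - k) (sub_pos.2 hp.2)]

end BinKL

section BernoulliWeight

variable {ι : Type*} [Fintype ι]

lemma card_div_card_mem_Icc (t : Finset ι) :
    (t.card / Fintype.card ι : ℝ) ∈ Set.Icc (0 : ℝ) 1 :=
  ⟨by positivity, div_le_one_of_le₀ (mod_cast t.card_le_univ) (Nat.cast_nonneg _)⟩

variable [DecidableEq ι]

/-- The probability that independent Bernoulli variables with success probabilities `x i` succeed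
exactly on `t`. Averaging over `t` with these weights replaces a `[0, 1]`-valued sample by a
`{0, 1}`-valued one with the same mean. -/
noncomputable def bernoulliWeight (x : ι → ℝ) (t : Finset ι) : ℝ :=
  (∏ i ∈ t, x i) * ∏ i ∈ tᶜ, (1 - x i)

lemma bernoulliWeight_eq_prod_ite (x : ι → ℝ) (t : Finset ι) :
    bernoulliWeight x t = ∏ i, if i ∈ t then x i else 1 - x i := by
  rw [bernoulliWeight, Finset.prod_ite, Finset.filter_univ_mem, ← Finset.compl_filter,
    Finset.filter_univ_mem]

lemma bernoulliWeight_const (p : ℝ) (t : Finset ι) :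
    bernoulliWeight (fun _ ↦ p) t = p ^ t.card * (1 - p) ^ (Fintype.card ι - t.card) := by
  rw [bernoulliWeight, Finset.prod_const, Finset.prod_const, Finset.card_compl]

lemma bernoulliWeight_nonneg {x : ι → ℝ} (hx : ∀ i, x i ∈ Set.Icc (0 : ℝ) 1) (t : Finset ι) :
    0 ≤ bernoulliWeight x t :=
  mul_nonneg (Finset.prod_nonneg fun i _ ↦ (hx i).1)
    (Finset.prod_nonneg fun i _ ↦ sub_nonneg.2 (hx i).2)

lemma sum_bernoulliWeight (x : ι → ℝ) : ∑ t, bernoulliWeight x t = 1 := by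
  simp only [bernoulliWeight, ← Fintype.prod_add, add_sub_cancel, Finset.prod_const_one]

lemma bernoulliWeight_le_one {x : ι → ℝ} (hx : ∀ i, x i ∈ Set.Icc (0 : ℝ) 1) (t : Finset ι) :
    bernoulliWeight x t ≤ 1 := by
  rw [← sum_bernoulliWeight x]
  exact Finset.single_le_sum (fun s _ ↦ bernoulliWeight_nonneg hx s) (Finset.mem_univ t)

lemma sum_bernoulliWeight_mul_ite_mem (x : ι → ℝ) (i : ι) :
    ∑ t, bernoulliWeight x t * (if i ∈ t then 1 else 0) = x i := by
  -- Zeroing the failure probability at `i` keeps exactly the terms with `i ∈ t`.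
  have hterm (t : Finset ι) : bernoulliWeight x t * (if i ∈ t then 1 else 0)
      = (∏ j ∈ t, x j) * ∏ j ∈ tᶜ, if j = i then 0 else 1 - x j := by
    split_ifs with hi
    · rw [mul_one, bernoulliWeight]
      congr 1
      refine Finset.prod_congr rfl fun j hj ↦ (if_neg ?_).symm
      rintro rfl
      exact Finset.mem_compl.1 hj hi
    · rw [mul_zero]
      exact (mul_eq_zero_of_right _ <|
        Finset.prod_eq_zero (i := i) (Finset.mem_compl.2 hi) (by simp)).symm
  simp_rw [hterm, ← Fintype.prod_add]
  rw [Fintype.prod_eq_single i fun j hj ↦ by simp [hj]]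
  simp

lemma sum_bernoulliWeight_mul_card (x : ι → ℝ) :
    ∑ t, bernoulliWeight x t * t.card = ∑ i, x i := by
  simp_rw [← sum_bernoulliWeight_mul_ite_mem x]
  rw [Finset.sum_comm]
  simp_rw [← Finset.mul_sum, Finset.sum_boole, Finset.filter_univ_mem]

lemma map_average_le_sum_bernoulliWeight {φ : ℝ → ℝ} (hφ : ConvexOn ℝ (Set.Icc 0 1) φ)
    {x : ι → ℝ} (hx : ∀ i, x i ∈ Set.Icc (0 : ℝ) 1) :
    φ ((∑ i, x i) / Fintype.card ι)
      ≤ ∑ t, bernoulliWeight x t * φ (t.card / Fintype.card ι) := by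
  have h := hφ.map_sum_le (t := Finset.univ) (w := bernoulliWeight x)
    (p := fun t ↦ (t.card / Fintype.card ι : ℝ)) (fun t _ ↦ bernoulliWeight_nonneg hx t)
    (sum_bernoulliWeight x) (fun t _ ↦ card_div_card_mem_Icc t)
  simpa only [smul_eq_mul, ← mul_div_assoc, ← Finset.sum_div, sum_bernoulliWeight_mul_card] using h

end BernoulliWeight

section Maurer

variable {ι Z : Type*} [Fintype ι] [MeasurableSpace Z] {D : Measure Z} [IsProbabilityMeasure D]
  {f : Z → ℝ}

lemma integrable_bernoulliWeight [DecidableEq ι] (hf : Measurable f)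
    (hf01 : ∀ z, f z ∈ Set.Icc (0 : ℝ) 1) (t : Finset ι) :
    Integrable (fun S : ι → Z ↦ bernoulliWeight (fun i ↦ f (S i)) t)
      (Measure.pi fun _ ↦ D) :=
  .of_mem_Icc 0 1 (by unfold bernoulliWeight; fun_prop) <| .of_forall fun S ↦
    ⟨bernoulliWeight_nonneg (fun i ↦ hf01 (S i)) t, bernoulliWeight_le_one (fun i ↦ hf01 (S i)) t⟩

lemma integral_bernoulliWeight [DecidableEq ι] (hf : Integrable f D) (t : Finset ι) :
    ∫ S : ι → Z, bernoulliWeight (fun i ↦ f (S i)) t ∂(Measure.pi fun _ ↦ D)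
      = (∫ z, f z ∂D) ^ t.card * (1 - ∫ z, f z ∂D) ^ (Fintype.card ι - t.card) := by
  have hfactor (i : ι) : ∫ z, (if i ∈ t then f z else 1 - f z) ∂D
      = if i ∈ t then ∫ z, f z ∂D else 1 - ∫ z, f z ∂D := by
    split_ifs
    · rfl
    · rw [integral_sub (integrable_const _) hf, integral_const, probReal_univ, one_smul]
  simp_rw [bernoulliWeight_eq_prod_ite]
  rw [integral_fintype_prod_eq_prod (fun i z ↦ if i ∈ t then f z else 1 - f z)]
  simp_rw [hfactor]
  rw [← bernoulliWeight_eq_prod_ite, bernoulliWeight_const]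

lemma lintegral_map_average_le_sum_binomial {φ : ℝ → ℝ} (hφ : ConvexOn ℝ (Set.Icc 0 1) φ)
    (hφ0 : ∀ q ∈ Set.Icc (0 : ℝ) 1, 0 ≤ φ q) (hf : Measurable f)
    (hf01 : ∀ z, f z ∈ Set.Icc (0 : ℝ) 1) :
    ∫⁻ S : ι → Z, ENNReal.ofReal (φ ((∑ i, f (S i)) / Fintype.card ι)) ∂(Measure.pi fun _ ↦ D)
      ≤ ENNReal.ofReal (∑ k ∈ Finset.range (Fintype.card ι + 1), (Fintype.card ι).choose k *
          ((∫ z, f z ∂D) ^ k * (1 - ∫ z, f z ∂D) ^ (Fintype.card ι - k)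
            * φ (k / Fintype.card ι))) := by
  classical
  have hfi : Integrable f D := .of_mem_Icc 0 1 hf.aemeasurable (.of_forall hf01)
  have hint (t : Finset ι) := (integrable_bernoulliWeight (D := D) hf hf01 t).mul_const
    (φ (t.card / Fintype.card ι))
  calc _ ≤ ∫⁻ S : ι → Z, ENNReal.ofReal (∑ t, bernoulliWeight (fun i ↦ f (S i)) t
          * φ (t.card / Fintype.card ι)) ∂(Measure.pi fun _ ↦ D) :=
        lintegral_mono fun S ↦ ENNReal.ofReal_le_ofReal <|
          map_average_le_sum_bernoulliWeight hφ fun i ↦ hf01 (S i)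
    _ = ENNReal.ofReal (∫ S : ι → Z, ∑ t, bernoulliWeight (fun i ↦ f (S i)) t
          * φ (t.card / Fintype.card ι) ∂(Measure.pi fun _ ↦ D)) :=
        (ofReal_integral_eq_lintegral_ofReal (integrable_finsetSum _ fun t _ ↦ hint t) <|
          .of_forall fun S ↦ Finset.sum_nonneg fun t _ ↦
            mul_nonneg (bernoulliWeight_nonneg (fun i ↦ hf01 (S i)) t)
              (hφ0 _ (card_div_card_mem_Icc t))).symm
    _ = _ := by
        simp_rw [integral_finsetSum _ fun t _ ↦ hint t, integral_mul_const,
          integral_bernoulliWeight hfi]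
        rw [← Finset.powerset_univ, Finset.sum_powerset_apply_card (fun k ↦ (∫ z, f z ∂D) ^ k
          * (1 - ∫ z, f z ∂D) ^ (Fintype.card ι - k) * φ (k / Fintype.card ι))]
        simp only [Finset.card_univ, nsmul_eq_mul]

lemma integral_mem_Icc (hf : AEMeasurable f D) (hf01 : ∀ z, f z ∈ Set.Icc (0 : ℝ) 1) :
    ∫ z, f z ∂D ∈ Set.Icc (0 : ℝ) 1 :=
  (convex_Icc 0 1).integral_mem isClosed_Icc (.of_forall hf01)
    (.of_mem_Icc 0 1 hf (.of_forall hf01))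

lemma ae_eq_integral_of_integral_notMem_Ioo (hf : AEMeasurable f D)
    (hf01 : ∀ z, f z ∈ Set.Icc (0 : ℝ) 1) (h : ∫ z, f z ∂D ∉ Set.Ioo (0 : ℝ) 1) :
    ∀ᵐ z ∂D, f z = ∫ z, f z ∂D := by
  have hfi : Integrable f D := .of_mem_Icc 0 1 hf (.of_forall hf01)
  obtain ⟨hp0, hp1⟩ := integral_mem_Icc hf hf01
  rcases hp0.eq_or_lt with h0 | h0
  · filter_upwards [(integral_eq_zero_iff_of_nonneg (fun z ↦ (hf01 z).1) hfi).1 h0.symm] with z hz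
    rw [hz, ← h0, Pi.zero_apply]
  · have h1 : ∫ z, f z ∂D = 1 := hp1.eq_of_not_lt fun hlt ↦ h ⟨h0, hlt⟩
    have hzero : ∫ z, (1 - f z) ∂D = 0 := by
      rw [integral_sub (integrable_const _) hfi, h1, integral_const, probReal_univ, one_smul,
        sub_self]
    filter_upwards [(integral_eq_zero_iff_of_nonneg (fun z ↦ sub_nonneg.2 (hf01 z).2)
      ((integrable_const _).sub hfi)).1 hzero] with z hz
    rw [h1, ← sub_eq_zero.1 hz]

lemma lintegral_exp_mul_binKL_eq_one_of_ae_eq [Nonempty ι] (c : ℝ)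
    (hf : ∀ᵐ z ∂D, f z = ∫ z, f z ∂D) :
    ∫⁻ S : ι → Z, ENNReal.ofReal (Real.exp
      (c * binKL ((∑ i, f (S i)) / Fintype.card ι) (∫ z, f z ∂D))) ∂(Measure.pi fun _ ↦ D) = 1 := by
  have hall : ∀ᵐ S : ι → Z ∂(Measure.pi fun _ ↦ D), ∀ i, f (S i) = ∫ z, f z ∂D :=
    ae_all_iff.2 fun i ↦ (Measure.quasiMeasurePreserving_eval (fun _ ↦ D) i).ae hf
  rw [← measure_univ (μ := Measure.pi fun _ : ι ↦ D), ← lintegral_one]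
  refine lintegral_congr_ae ?_
  filter_upwards [hall] with S hS
  simp [hS, binKL_self]

theorem lintegral_exp_card_mul_binKL_le [Nonempty ι] (hf : Measurable f)
    (hf01 : ∀ z, f z ∈ Set.Icc (0 : ℝ) 1) :
    ∫⁻ S : ι → Z, ENNReal.ofReal (Real.exp
      (Fintype.card ι * binKL ((∑ i, f (S i)) / Fintype.card ι) (∫ z, f z ∂D)))
        ∂(Measure.pi fun _ ↦ D) ≤ ENNReal.ofReal (8 * √(Fintype.card ι)) := by
  set n := Fintype.card ι with hn
  have hn0 : n ≠ 0 := Fintype.card_ne_zero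
  by_cases hp : ∫ z, f z ∂D ∈ Set.Ioo (0 : ℝ) 1
  · refine (lintegral_map_average_le_sum_binomial (convexOn_exp_mul_binKL n.cast_nonneg hp)
      (fun q _ ↦ (Real.exp_pos _).le) hf hf01).trans (ENNReal.ofReal_le_ofReal ?_)
    refine le_of_eq_of_le (Finset.sum_congr rfl fun k hk ↦ ?_)
      (sum_choose_mul_div_pow_mul_div_pow_le hn0)
    rw [← hn, pow_mul_pow_mul_exp_mul_binKL hn0 (Finset.mem_range_succ_iff.1 hk) hp, mul_assoc]
  · have hsqrt : (1 : ℝ) ≤ √n := Real.one_le_sqrt.2 (mod_cast Nat.one_le_iff_ne_zero.2 hn0)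
    rw [lintegral_exp_mul_binKL_eq_one_of_ae_eq _
      (ae_eq_integral_of_integral_notMem_Ioo hf.aemeasurable hf01 hp), ENNReal.one_le_ofReal]
    linarith

end Maurer

section ChangeOfMeasure

lemma one_sub_le_measure_le_log_of_lintegral_exp_le {Ω : Type*} [MeasurableSpace Ω] {μ : Measure Ω}
    [IsProbabilityMeasure μ] {X : Ω → ℝ} (hX : Measurable X) {C δ : ℝ} (hC : 0 < C) (hδ : 0 < δ)
    (hint : ∫⁻ ω, ENNReal.ofReal (Real.exp (X ω)) ∂μ ≤ ENNReal.ofReal C) :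
    1 - ENNReal.ofReal δ ≤ μ {ω | X ω ≤ Real.log (C / δ)} := by
  have hCδ : 0 < C / δ := div_pos hC hδ
  have hmarkov : μ {ω | X ω ≤ Real.log (C / δ)}ᶜ ≤ ENNReal.ofReal δ := calc
    _ ≤ μ {ω | ENNReal.ofReal (C / δ) ≤ ENNReal.ofReal (Real.exp (X ω))} :=
        measure_mono fun ω hω ↦ ENNReal.ofReal_le_ofReal <|
          (Real.log_le_iff_le_exp hCδ).1 (not_le.1 hω).le
    _ ≤ (∫⁻ ω, ENNReal.ofReal (Real.exp (X ω)) ∂μ) / ENNReal.ofReal (C / δ) :=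
        meas_ge_le_lintegral_div (by fun_prop) (ENNReal.ofReal_pos.2 hCδ).ne' ENNReal.ofReal_ne_top
    _ ≤ ENNReal.ofReal C / ENNReal.ofReal (C / δ) := by gcongr
    _ = ENNReal.ofReal δ := by rw [← ENNReal.ofReal_div_of_pos hCδ, div_div_cancel₀ hC.ne']
  rw [← compl_compl {ω | X ω ≤ Real.log (C / δ)},
    prob_compl_eq_one_sub (measurableSet_le hX measurable_const).compl]
  gcongr

variable {H : Type*} [MeasurableSpace H]

lemma lintegral_exp_mul_lintegral_tilted_le (P : Measure H) (w : H → ℝ) (φ : H → ENNReal) :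
    (∫⁻ h, ENNReal.ofReal (Real.exp (w h)) ∂P)
      * ∫⁻ h, ENNReal.ofReal (Real.exp (-w h)) * φ h ∂(P.tilted w) ≤ ∫⁻ h, φ h ∂P := by
  by_cases hw : Integrable (fun h ↦ Real.exp (w h)) P
  swap
  · simp [tilted_of_not_integrable hw]
  set N := ∫ h, Real.exp (w h) ∂P
  have hN : ∫⁻ h, ENNReal.ofReal (Real.exp (w h)) ∂P = ENNReal.ofReal N :=
    (ofReal_integral_eq_lintegral_ofReal hw (.of_forall fun h ↦ (Real.exp_pos _).le)).symm
  have hdensity (h : H) : ENNReal.ofReal (Real.exp (w h) / N)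
      * (ENNReal.ofReal (Real.exp (-w h)) * φ h) = ENNReal.ofReal N⁻¹ * φ h := by
    rw [← mul_assoc, ← ENNReal.ofReal_mul' (Real.exp_pos _).le, div_mul_eq_mul_div,
      ← Real.exp_add, add_neg_cancel, Real.exp_zero, one_div]
  rw [hN, lintegral_tilted, lintegral_congr hdensity,
    lintegral_const_mul' _ _ ENNReal.ofReal_ne_top, ← mul_assoc,
    ← ENNReal.ofReal_mul (integral_nonneg fun h ↦ (Real.exp_pos _).le)]
  exact mul_le_of_le_one_left' (ENNReal.ofReal_le_one.2 mul_inv_le_one)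

lemma lintegral_exp_prod_tilted_le {P P₀ : Measure H} [SFinite P] {w X : H → ℝ} {ε : ℝ}
    (hP : P ≤ ENNReal.ofReal (Real.exp ε) • P₀) (hw : Measurable w) (hX : Measurable X) :
    ∫⁻ hh, ENNReal.ofReal (Real.exp (X hh.2 - (w hh.2 - w hh.1 + ε))) ∂(P.prod (P.tilted w))
      ≤ ∫⁻ h, ENNReal.ofReal (Real.exp (X h)) ∂P₀ := by
  have hfactor (hh : H × H) : ENNReal.ofReal (Real.exp (X hh.2 - (w hh.2 - w hh.1 + ε)))
      = ENNReal.ofReal (Real.exp (-ε)) * (ENNReal.ofReal (Real.exp (w hh.1))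
        * (ENNReal.ofReal (Real.exp (-w hh.2)) * ENNReal.ofReal (Real.exp (X hh.2)))) := by
    simp only [← ENNReal.ofReal_mul (Real.exp_pos _).le, ← Real.exp_add]
    ring_nf
  calc _ = ENNReal.ofReal (Real.exp (-ε)) * ((∫⁻ h, ENNReal.ofReal (Real.exp (w h)) ∂P)
          * ∫⁻ h, ENNReal.ofReal (Real.exp (-w h)) * ENNReal.ofReal (Real.exp (X h))
            ∂(P.tilted w)) := by
        rw [lintegral_congr hfactor, lintegral_const_mul' _ _ ENNReal.ofReal_ne_top,
          lintegral_prod_mul (f := fun h ↦ ENNReal.ofReal (Real.exp (w h)))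
            (g := fun h ↦ ENNReal.ofReal (Real.exp (-w h)) * ENNReal.ofReal (Real.exp (X h)))
            (by fun_prop) (by fun_prop)]
    _ ≤ ENNReal.ofReal (Real.exp (-ε)) * ∫⁻ h, ENNReal.ofReal (Real.exp (X h))
          ∂(ENNReal.ofReal (Real.exp ε) • P₀) := by
        gcongr
        exact (lintegral_exp_mul_lintegral_tilted_le _ _ _).trans (lintegral_mono' hP le_rfl)
    _ = ∫⁻ h, ENNReal.ofReal (Real.exp (X h)) ∂P₀ := by
        rw [lintegral_smul_measure, smul_eq_mul, ← mul_assoc,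
          ← ENNReal.ofReal_mul (Real.exp_pos _).le, ← Real.exp_add, neg_add_cancel,
          Real.exp_zero, ENNReal.ofReal_one, one_mul]

variable {Ω : Type*} [MeasurableSpace Ω] {μ : Measure Ω} {κP κQ : Kernel Ω H} {P₀ : Measure H}
  [IsProbabilityMeasure P₀] {w X : Ω → H → ℝ} {C ε : ℝ}

lemma lintegral_exp_compProd_tilted_le [SFinite μ] [IsSFiniteKernel κP] [IsSFiniteKernel κQ]
    (hP : ∀ ω, κP ω ≤ ENNReal.ofReal (Real.exp ε) • P₀)
    (hQ : ∀ ω, κQ ω = (κP ω).tilted (w ω)) (hw : Measurable (Function.uncurry w))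
    (hX : Measurable (Function.uncurry X))
    (hC : ∀ h, ∫⁻ ω, ENNReal.ofReal (Real.exp (X ω h)) ∂μ ≤ ENNReal.ofReal C) :
    ∫⁻ q, ENNReal.ofReal (Real.exp (X q.1 q.2.2 - (w q.1 q.2.2 - w q.1 q.2.1 + ε)))
      ∂(μ ⊗ₘ (κP ×ₖ κQ)) ≤ ENNReal.ofReal C := by
  have hfiber (ω : Ω) : ∫⁻ hh, ENNReal.ofReal (Real.exp (X ω hh.2 - (w ω hh.2 - w ω hh.1 + ε)))
      ∂((κP ×ₖ κQ) ω) ≤ ∫⁻ h, ENNReal.ofReal (Real.exp (X ω h)) ∂P₀ := by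
    rw [Kernel.prod_apply, hQ]
    exact lintegral_exp_prod_tilted_le (hP ω) hw.of_uncurry_left hX.of_uncurry_left
  calc _ = ∫⁻ ω, ∫⁻ hh, ENNReal.ofReal (Real.exp (X ω hh.2 - (w ω hh.2 - w ω hh.1 + ε)))
          ∂((κP ×ₖ κQ) ω) ∂μ := Measure.lintegral_compProd (by fun_prop)
    _ ≤ ∫⁻ ω, ∫⁻ h, ENNReal.ofReal (Real.exp (X ω h)) ∂P₀ ∂μ := lintegral_mono hfiber
    _ = ∫⁻ h, ∫⁻ ω, ENNReal.ofReal (Real.exp (X ω h)) ∂μ ∂P₀ :=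
        lintegral_lintegral_swap (by fun_prop)
    _ ≤ ∫⁻ _, ENNReal.ofReal C ∂P₀ := lintegral_mono hC
    _ = ENNReal.ofReal C := by simp

theorem one_sub_le_compProd_tilted_measure_le [IsProbabilityMeasure μ] [IsMarkovKernel κP]
    [IsMarkovKernel κQ] (hP : ∀ ω, κP ω ≤ ENNReal.ofReal (Real.exp ε) • P₀)
    (hQ : ∀ ω, κQ ω = (κP ω).tilted (w ω)) (hw : Measurable (Function.uncurry w))
    (hX : Measurable (Function.uncurry X))
    (hC : ∀ h, ∫⁻ ω, ENNReal.ofReal (Real.exp (X ω h)) ∂μ ≤ ENNReal.ofReal C) (hC0 : 0 < C)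
    {δ : ℝ} (hδ : 0 < δ) :
    1 - ENNReal.ofReal δ ≤ (μ ⊗ₘ (κP ×ₖ κQ)) {q | X q.1 q.2.2
      ≤ w q.1 q.2.2 - w q.1 q.2.1 + ε + Real.log (C / δ)} := by
  simp only [← sub_le_iff_le_add']
  exact one_sub_le_measure_le_log_of_lintegral_exp_le (by fun_prop) hC0 hδ
    (lintegral_exp_compProd_tilted_le hP hQ hw hX hC)

end ChangeOfMeasure

section Tilting

variable {H : Type*} [MeasurableSpace H]

lemma tilted_le_exp_smul_tilted {lam : Measure H} {f g : H → ℝ} {c : ℝ} (hg : AEMeasurable g lam)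
    (hfg : ∀ h, |f h - g h| ≤ c) :
    lam.tilted f ≤ ENNReal.ofReal (Real.exp (2 * c)) • lam.tilted g := by
  by_cases hf : Integrable (fun h ↦ Real.exp (f h)) lam
  swap
  · rw [tilted_of_not_integrable hf]
    exact Measure.zero_le _
  rcases eq_zero_or_neZero lam with rfl | _
  · simp
  have hexp_le (h : H) : Real.exp (f h) ≤ Real.exp c * Real.exp (g h) := by
    rw [← Real.exp_add, Real.exp_le_exp]
    linarith [(abs_le.1 (hfg h)).2]
  have hexp_ge (h : H) : Real.exp (g h) ≤ Real.exp c * Real.exp (f h) := by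
    rw [← Real.exp_add, Real.exp_le_exp]
    linarith [(abs_le.1 (hfg h)).1]
  have hgi : Integrable (fun h ↦ Real.exp (g h)) lam :=
    (hf.const_mul (Real.exp c)).mono' (by fun_prop) <| .of_forall fun h ↦ by
      simpa only [Real.norm_eq_abs, Real.abs_exp] using hexp_ge h
  have hnorm : ∫ h, Real.exp (g h) ∂lam ≤ Real.exp c * ∫ h, Real.exp (f h) ∂lam := by
    rw [← integral_const_mul]
    exact integral_mono hgi (hf.const_mul _) hexp_ge
  have hNf := integral_exp_pos hf
  have hNg := integral_exp_pos hgi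
  rw [Measure.tilted, Measure.tilted, ← withDensity_smul' _ _ ENNReal.ofReal_ne_top]
  refine withDensity_mono (.of_forall fun h ↦ ?_)
  rw [Pi.smul_apply, smul_eq_mul, ← ENNReal.ofReal_mul (Real.exp_pos _).le, two_mul, Real.exp_add]
  refine ENNReal.ofReal_le_ofReal ?_
  rw [mul_div_assoc', div_le_div_iff₀ hNf hNg]
  calc Real.exp (f h) * ∫ h, Real.exp (g h) ∂lam
      ≤ (Real.exp c * Real.exp (g h)) * (Real.exp c * ∫ h, Real.exp (f h) ∂lam) := by
        gcongr
        exact hexp_le h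
    _ = _ := by ring

lemma integrable_exp_of_tilted_ne_zero {lam : Measure H} {f : H → ℝ} (hf : lam.tilted f ≠ 0) :
    Integrable (fun h ↦ Real.exp (f h)) lam :=
  of_not_not <| mt tilted_of_not_integrable hf

lemma tilted_neg_mul_eq_tilted_tilted {lam : Measure H} {α β : ℝ} {r : H → ℝ}
    (hβ : lam.tilted (fun h ↦ -(β * r h)) ≠ 0) :
    lam.tilted (fun h ↦ -(α * r h))
      = (lam.tilted fun h ↦ -(β * r h)).tilted fun h ↦ (β - α) * r h := by
  rw [tilted_tilted (integrable_exp_of_tilted_ne_zero hβ)]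
  congr 1 with h
  simp only [Pi.add_apply]
  ring

end Tilting

section Risk

lemma empRisk_mem_Icc {H Z : Type*} {m : ℕ} {ℓ : H → Z → ℝ} {h : H}
    (hℓ01 : ∀ z, ℓ h z ∈ Set.Icc (0 : ℝ) 1) (S : Fin m → Z) :
    empRisk ℓ h S ∈ Set.Icc (0 : ℝ) 1 := by
  have hsum : ∑ i, ℓ h (S i) ≤ m := by
    simpa using Finset.sum_le_sum fun i (_ : i ∈ Finset.univ) ↦ (hℓ01 (S i)).2
  exact ⟨div_nonneg (Finset.sum_nonneg fun i _ ↦ (hℓ01 (S i)).1) m.cast_nonneg,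
    div_le_one_of_le₀ hsum m.cast_nonneg⟩

lemma lintegral_exp_mul_binKL_empRisk_le {H Z : Type*} [MeasurableSpace Z] {m : ℕ} (hm : 0 < m)
    {D : Measure Z} [IsProbabilityMeasure D] {ℓ : H → Z → ℝ} {h : H} (hℓ : Measurable (ℓ h))
    (hℓ01 : ∀ z, ℓ h z ∈ Set.Icc (0 : ℝ) 1) :
    ∫⁻ S : Fin m → Z, ENNReal.ofReal (Real.exp (m * binKL (empRisk ℓ h S) (trueRisk D ℓ h)))
      ∂(Measure.pi fun _ ↦ D) ≤ ENNReal.ofReal (8 * √m) := by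
  have : NeZero m := ⟨hm.ne'⟩
  simpa only [Fintype.card_fin, empRisk, trueRisk] using
    lintegral_exp_card_mul_binKL_le (ι := Fin m) (D := D) hℓ hℓ01

variable {H Z : Type*} [MeasurableSpace H] [MeasurableSpace Z] {m : ℕ} {ℓ : H → Z → ℝ}

lemma measurable_empRisk (hℓ : Measurable (Function.uncurry ℓ)) :
    Measurable (Function.uncurry fun (S : Fin m → Z) h ↦ empRisk ℓ h S) := by
  unfold empRisk Function.uncurry
  fun_prop

lemma measurable_trueRisk {D : Measure Z} [SFinite D] (hℓ : Measurable (Function.uncurry ℓ)) :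
    Measurable (trueRisk D ℓ) :=
  hℓ.stronglyMeasurable.integral_prod_right.measurable

lemma tilted_empRisk_le_exp_smul_tilted_empRisk {lam : Measure H}
    (hℓ : Measurable (Function.uncurry ℓ)) (hℓ01 : ∀ h z, ℓ h z ∈ Set.Icc (0 : ℝ) 1)
    (β : ℝ) (S S₀ : Fin m → Z) :
    lam.tilted (fun h ↦ -(β * empRisk ℓ h S))
      ≤ ENNReal.ofReal (Real.exp (2 * |β|)) • lam.tilted fun h ↦ -(β * empRisk ℓ h S₀) := by
  refine tilted_le_exp_smul_tilted
    ((measurable_empRisk hℓ).of_uncurry_left.const_mul β).neg.aemeasurable fun h ↦ ?_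
  obtain ⟨hS0, hS1⟩ := empRisk_mem_Icc (hℓ01 h) S
  obtain ⟨hS₀0, hS₀1⟩ := empRisk_mem_Icc (hℓ01 h) S₀
  rw [neg_sub_neg, ← mul_sub, abs_mul]
  exact mul_le_of_le_one_right (abs_nonneg β) (abs_le.2 ⟨by linarith, by linarith⟩)

end Risk

lemma measure_le_prod_of_forall_mem {A B : Type*} [MeasurableSpace A] [MeasurableSpace B]
    {μ : Measure A} [IsProbabilityMeasure μ] {ν : Measure B} [SFinite ν] {s : Set B}
    {t : Set (A × B)} (h : ∀ a, ∀ b ∈ s, (a, b) ∈ t) : ν s ≤ μ.prod ν t := calc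
  ν s = μ.prod ν (Set.univ ×ˢ s) := by rw [Measure.prod_prod, measure_univ, one_mul]
  _ ≤ μ.prod ν t := measure_mono fun p hp ↦ h p.1 p.2 hp.2

theorem dziugaite_roy_gibbs_bound_general {Z H : Type*} [MeasurableSpace Z] [MeasurableSpace H]
    {m : ℕ} (hm : 0 < m) (D : Measure Z) [IsProbabilityMeasure D] (lam : Measure H)
    {ℓ : H → Z → ℝ} (hℓ : Measurable (Function.uncurry ℓ))
    (hℓ01 : ∀ h z, ℓ h z ∈ Set.Icc (0 : ℝ) 1)
    {ℓ' : H → Z → ℝ} (hℓ' : Measurable (Function.uncurry ℓ'))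
    (hℓ'01 : ∀ h z, ℓ' h z ∈ Set.Icc (0 : ℝ) 1) (α α' : ℝ)
    (κQ : Kernel (Fin m → Z) H) [IsMarkovKernel κQ]
    (hκQ : ∀ S, κQ S = lam.tilted fun h ↦ -(α * empRisk ℓ' h S))
    (κP : Kernel (Fin m → Z) H) [IsMarkovKernel κP]
    (hκP : ∀ S, κP S = lam.tilted fun h ↦ -(α' * empRisk ℓ' h S)) {δ : ℝ} (hδ : 0 < δ) :
    1 - ENNReal.ofReal δ ≤ (Measure.pi (fun _ : Fin m ↦ D) ⊗ₘ (κP ×ₖ κQ))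
      {q | binKL (empRisk ℓ q.2.2 q.1) (trueRisk D ℓ q.2.2) ≤
        (1 / m) * (α * (empRisk ℓ' q.2.1 q.1 - empRisk ℓ' q.2.2 q.1)
          + α' * (empRisk ℓ' q.2.2 q.1 - empRisk ℓ' q.2.1 q.1)
          + 2 * |α'| + Real.log (8 * √m / δ))} := by
  have hm0 : (0 : ℝ) < m := Nat.cast_pos.2 hm
  obtain ⟨z₀⟩ : Nonempty Z := nonempty_of_isProbabilityMeasure D
  have hP (S : Fin m → Z) : κP S ≤ ENNReal.ofReal (Real.exp (2 * |α'|)) • κP fun _ ↦ z₀ := by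
    rw [hκP, hκP]
    exact tilted_empRisk_le_exp_smul_tilted_empRisk hℓ' hℓ'01 α' S _
  have hQ (S : Fin m → Z) : κQ S = (κP S).tilted fun h ↦ (α' - α) * empRisk ℓ' h S := by
    rw [hκQ, hκP]
    exact tilted_neg_mul_eq_tilted_tilted (hκP S ▸ IsProbabilityMeasure.ne_zero (κP S))
  have hX : Measurable (Function.uncurry fun (S : Fin m → Z) h ↦
      m * binKL (empRisk ℓ h S) (trueRisk D ℓ h)) :=
    (measurable_binKL (measurable_empRisk hℓ)
      ((measurable_trueRisk hℓ).comp measurable_snd)).const_mul _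
  refine (one_sub_le_compProd_tilted_measure_le hP hQ ((measurable_empRisk hℓ').const_mul _) hX
    (fun h ↦ lintegral_exp_mul_binKL_empRisk_le hm hℓ.of_uncurry_left (hℓ01 h))
    (by positivity) hδ).trans (measure_mono fun q hq ↦ ?_)
  rw [Set.mem_ofPred_eq, one_div_mul_eq_div, le_div_iff₀' hm0]
  exact le_of_le_of_eq hq (by ring)

/-- **Dziugaite–Roy-type bound for Gibbs posterior and Gibbs data-dependent
prior.**  With the posterior `Q_S ∝ exp(−α·R_S^{ℓ′})` and the data-dependent
prior `P_S ∝ exp(−α′·R_S^{ℓ′})`, with probability at least `1−δ` over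
`S′ ∼ D^m`, `S ∼ D^m`, `h′ ∼ P_S` and `h ∼ Q_S`,
`kl(R_S^ℓ(h) ‖ R_D^ℓ(h)) ≤ (1/m)·[α·(R_S^{ℓ′}(h′) − R_S^{ℓ′}(h))
  + α′·(R_S^{ℓ′}(h) − R_S^{ℓ′}(h′)) + 2α′ + ln(8√m/δ²)]`. -/
theorem dziugaite_roy_gibbs_bound
    {Z H : Type*} [MeasurableSpace Z] [MeasurableSpace H]
    (m : ℕ) (hm : 0 < m)
    (D : Measure Z) [IsProbabilityMeasure D]
    (lam : Measure H) [SigmaFinite lam]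
    (ℓ : H → Z → ℝ) (hℓ : Measurable (Function.uncurry ℓ))
    (hℓ01 : ∀ h z, ℓ h z ∈ Set.Icc (0:ℝ) 1)
    (ℓ' : H → Z → ℝ) (hℓ' : Measurable (Function.uncurry ℓ'))
    (hℓ'01 : ∀ h z, ℓ' h z ∈ Set.Icc (0:ℝ) 1)
    (α α' : ℝ) (hα : 0 ≤ α) (hα' : 0 ≤ α')
    -- normalizers finite and positive
    (hQint : ∀ S : Fin m → Z,
      Integrable (fun g => Real.exp (-(α * empRisk ℓ' g S))) lam)
    (hQpos : ∀ S : Fin m → Z,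
      0 < ∫ g, Real.exp (-(α * empRisk ℓ' g S)) ∂lam)
    (hPint : ∀ S : Fin m → Z,
      Integrable (fun g => Real.exp (-(α' * empRisk ℓ' g S))) lam)
    (hPpos : ∀ S : Fin m → Z,
      0 < ∫ g, Real.exp (-(α' * empRisk ℓ' g S)) ∂lam)
    -- the Gibbs posterior kernel
    (κQ : Kernel (Fin m → Z) H) [IsMarkovKernel κQ]
    (hκQ : ∀ S, κQ S = lam.withDensity fun h =>
      ENNReal.ofReal (Real.exp (-(α * empRisk ℓ' h S)) /
        ∫ g, Real.exp (-(α * empRisk ℓ' g S)) ∂lam))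
    -- the Gibbs data-dependent prior kernel
    (κP : Kernel (Fin m → Z) H) [IsMarkovKernel κP]
    (hκP : ∀ S, κP S = lam.withDensity fun h =>
      ENNReal.ofReal (Real.exp (-(α' * empRisk ℓ' h S)) /
        ∫ g, Real.exp (-(α' * empRisk ℓ' g S)) ∂lam))
    (δ : ℝ) (hδ : δ ∈ Set.Ioc (0:ℝ) 1) :
    1 - ENNReal.ofReal δ ≤
      ((Measure.pi (fun _ : Fin m => D)).prod
          (Measure.pi (fun _ : Fin m => D) ⊗ₘ (κP ×ₖ κQ)))
        {p : (Fin m → Z) × ((Fin m → Z) × (H × H)) |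
          binKL (empRisk ℓ p.2.2.2 p.2.1) (trueRisk D ℓ p.2.2.2) ≤
            (1/m) * (α * (empRisk ℓ' p.2.2.1 p.2.1 - empRisk ℓ' p.2.2.2 p.2.1)
              + α' * (empRisk ℓ' p.2.2.2 p.2.1 - empRisk ℓ' p.2.2.1 p.2.1)
              + 2*α' + Real.log (8 * Real.sqrt m / δ^2)) } := by
  have hδ0 : 0 < δ := hδ.1
  have hδsq : δ ^ 2 ≤ δ := pow_le_of_le_one hδ0.le hδ.2 two_ne_zero
  refine (dziugaite_roy_gibbs_bound_general hm D lam hℓ hℓ01 hℓ' hℓ'01 α α' κQ hκQ κP hκP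
    hδ0).trans (measure_le_prod_of_forall_mem fun _ q hq ↦ ?_)
  simp only [Set.mem_ofPred_eq, abs_of_nonneg hα'] at hq ⊢
  exact hq.trans (by gcongr)
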